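/- If there exists a secure equilibrium in a quantitative two-player reachability game G, then there exists a finite-memory secure equilibrium of the same type in G. -/

import Mathlib

/-- A quantitative multiplayer reachability game: a finite directed graph whose
vertex set is partitioned among the players (via `owner`), with an initial vertex `v0`,
an edge relation `E` such that every vertex has an outgoing edge, and a goal set
`goal i` for each player `i`. -/
structure ReachGame (P : Type) (V : Type) where
  owner : V → P
  v0 : V
  E : V → V → Prop
  total : ∀ v : V, ∃ w : V, E v w
  goal : P → Set V

namespace ReachGame

variable {P V : Type} [DecidableEq P] (G : ReachGame P V)

/-- The last vertex of a history (with default `v0`). -/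
def lastV (h : List V) : V := h.getLastD G.v0

/-- A history: a nonempty finite path in the graph starting at `v0`. -/
def IsHistory (h : List V) : Prop :=
  h ≠ [] ∧ h.head? = some G.v0 ∧ List.Chain' G.E h

/-- A play: an infinite path starting at `v0`. -/
def IsPlay (ρ : ℕ → V) : Prop :=
  ρ 0 = G.v0 ∧ ∀ k : ℕ, G.E (ρ k) (ρ (k + 1))

/-- `σ` is a (total encoding of a) strategy of player `i`: on every history ending in
a vertex owned by `i` it chooses a successor along an edge. -/
def IsStrategy (i : P) (σ : List V → V) : Prop :=
  ∀ h : List V, G.IsHistory h → G.owner (G.lastV h) = i → G.E (G.lastV h) (σ h)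

/-- A strategy profile: one strategy per player. -/
def IsProfile (prof : P → List V → V) : Prop :=
  ∀ i : P, G.IsStrategy i (prof i)

/-- The history of length `n` (i.e. with `n` edges) obtained by letting the players
follow the profile `prof` from `v0`. -/
def outHist (prof : P → List V → V) : ℕ → List V
  | 0 => [G.v0]
  | n + 1 => outHist prof n ++ [prof (G.owner (G.lastV (outHist prof n))) (outHist prof n)]

/-- The outcome play of the strategy profile `prof`. -/
def outcome (prof : P → List V → V) (n : ℕ) : V :=
  G.lastV (G.outHist prof n)

/-- The cost of player `i` for the play `ρ`: the least `l` with `ρ l ∈ goal i`,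
and `⊤` (`+∞`) if there is no such `l`. -/
noncomputable def cost (i : P) (ρ : ℕ → V) : ℕ∞ :=
  sInf {n : ℕ∞ | ∃ l : ℕ, n = (l : ℕ∞) ∧ ρ l ∈ G.goal i}

/-- Nash equilibrium: no player can strictly decrease his cost by a unilateral
deviation. -/
def IsNash (prof : P → List V → V) : Prop :=
  ∀ (j : P) (σ' : List V → V), G.IsStrategy j σ' →
    G.cost j (G.outcome prof) ≤ G.cost j (G.outcome (Function.update prof j σ'))

/-- `h ≈_σ h'` : the strategy `σ` of player `i` behaves the same after `h` and `h'`,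
i.e. `σ (h ++ δ) = σ (h' ++ δ)` for every suffix `δ` making both `h ++ δ` and
`h' ++ δ` histories ending in a vertex of player `i`. -/
def MemEq (i : P) (σ : List V → V) (h h' : List V) : Prop :=
  ∀ δ : List V,
    G.IsHistory (h ++ δ) → G.owner (G.lastV (h ++ δ)) = i →
    G.IsHistory (h' ++ δ) → G.owner (G.lastV (h' ++ δ)) = i →
    σ (h ++ δ) = σ (h' ++ δ)

/-- A strategy of player `i` is finite-memory if the relation `≈_σ` has finitely many
equivalence classes on histories, i.e. there is a finite set of histories meeting
every class. -/
def FiniteMemory (i : P) (σ : List V → V) : Prop :=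
  ∃ S : Finset (List V), ∀ h : List V, G.IsHistory h →
    ∃ h' ∈ S, G.IsHistory h' ∧ G.MemEq i σ h h'

/-- A profile is finite-memory if each of its strategies is. -/
def FiniteMemoryProfile (prof : P → List V → V) : Prop :=
  ∀ i : P, G.FiniteMemory i (prof i)

/-- `Visit h`: the set of players whose goal set is visited by the finite path `h`. -/
def visitL (h : List V) : Set P := {i : P | ∃ v ∈ h, v ∈ G.goal i}

/-- The type of a strategy profile: the set of players whose goal set is visited by
the outcome. -/
def typeOf (prof : P → List V → V) : Set P :=
  {i : P | ∃ l : ℕ, G.outcome prof l ∈ G.goal i}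

/-! ### The truncated game `G^d` -/

/-- A strategy of player `i` in the truncated game `G^d` : it chooses a successor on
every history with less than `d` edges (list length `≤ d`) ending in a vertex of `i`. -/
def IsStrategyTrunc (d : ℕ) (i : P) (σ : List V → V) : Prop :=
  ∀ h : List V, G.IsHistory h → h.length ≤ d → G.owner (G.lastV h) = i →
    G.E (G.lastV h) (σ h)

/-- A strategy profile of the truncated game `G^d`. -/
def IsProfileTrunc (d : ℕ) (prof : P → List V → V) : Prop :=
  ∀ i : P, G.IsStrategyTrunc d i (prof i)

/-- The cost of player `i` for a finite play `h` (a list of vertices): the least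
position of `h` lying in `goal i`, and `⊤` if `goal i` is not visited. -/
noncomputable def costList (i : P) (h : List V) : ℕ∞ :=
  sInf {n : ℕ∞ | ∃ l : ℕ, n = (l : ℕ∞) ∧ l < h.length ∧ h.getD l G.v0 ∈ G.goal i}

/-- Nash equilibrium of the truncated game `G^d` (whose plays are the histories with
exactly `d` edges). -/
def IsNashTrunc (d : ℕ) (prof : P → List V → V) : Prop :=
  ∀ (j : P) (σ' : List V → V), G.IsStrategyTrunc d j σ' →
    G.costList j (G.outHist prof d) ≤
      G.costList j (G.outHist (Function.update prof j σ') d)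

/-- The type of a strategy profile of the truncated game `G^d`. -/
def typeOfTrunc (d : ℕ) (prof : P → List V → V) : Set P :=
  G.visitL (G.outHist prof d)

end ReachGame

/-- `(x₁,x₂) ≺₁ (y₁,y₂)` iff `x₁ > y₁`, or `x₁ = y₁` and `x₂ < y₂` :
player 1 prefers the cost profile `y` to `x`. -/
def prec1 (x y : ℕ∞ × ℕ∞) : Prop := y.1 < x.1 ∨ (x.1 = y.1 ∧ x.2 < y.2)

/-- `(x₁,x₂) ≺₂ (y₁,y₂)` iff `x₂ > y₂`, or `x₂ = y₂` and `x₁ < y₁` :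
player 2 prefers the cost profile `y` to `x`. -/
def prec2 (x y : ℕ∞ × ℕ∞) : Prop := y.2 < x.2 ∨ (x.2 = y.2 ∧ x.1 < y.1)

namespace ReachGame

variable {V : Type} (G : ReachGame (Fin 2) V)

/-- The pair of costs of the two players for the play `ρ`. -/
noncomputable def costPair (ρ : ℕ → V) : ℕ∞ × ℕ∞ := (G.cost 0 ρ, G.cost 1 ρ)

/-- Secure equilibrium: no player `j` has a `≺ⱼ`-profitable deviation. -/
def IsSecure (prof : Fin 2 → List V → V) : Prop :=
  (∀ σ' : List V → V, G.IsStrategy 0 σ' →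
    ¬ prec1 (G.costPair (G.outcome prof))
        (G.costPair (G.outcome (Function.update prof 0 σ')))) ∧
  (∀ σ' : List V → V, G.IsStrategy 1 σ' →
    ¬ prec2 (G.costPair (G.outcome prof))
        (G.costPair (G.outcome (Function.update prof 1 σ'))))

/-- The pair of costs of the two players for a finite play `h`. -/
noncomputable def costListPair (h : List V) : ℕ∞ × ℕ∞ := (G.costList 0 h, G.costList 1 h)

/-- Secure equilibrium of the truncated game `G^d`. -/
def IsSecureTrunc (d : ℕ) (prof : Fin 2 → List V → V) : Prop :=
  (∀ σ' : List V → V, G.IsStrategyTrunc d 0 σ' →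
    ¬ prec1 (G.costListPair (G.outHist prof d))
        (G.costListPair (G.outHist (Function.update prof 0 σ') d))) ∧
  (∀ σ' : List V → V, G.IsStrategyTrunc d 1 σ' →
    ¬ prec2 (G.costListPair (G.outHist prof d))
        (G.costListPair (G.outHist (Function.update prof 1 σ') d)))

end ReachGame

/-!
Follow the given secure equilibrium for `N` steps, where `N` bounds every finite cost of its
outcome, and from then on play positionally: player `i` stays inside the set `R` of vertices that
the opponent can reach by deviating from the original profile. If the opponent's cost in the
equilibrium is infinite, `R` misses his goal set, since otherwise he would have a profitable
deviation; so he cannot reach his goal by deviating from the new profile either. All other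
comparisons between costs are settled by the first `N` steps, which the two profiles share.
-/

namespace ReachGame

section Costs

variable {P V : Type} (G : ReachGame P V) {i : P} {ρ π : ℕ → V} {N : ℕ}

theorem cost_le_of_mem_goal {l : ℕ} (hl : ρ l ∈ G.goal i) : G.cost i ρ ≤ l :=
  sInf_le ⟨l, rfl, hl⟩

theorem cost_ne_top_iff : G.cost i ρ ≠ ⊤ ↔ ∃ l, ρ l ∈ G.goal i := by
  rw [← lt_top_iff_ne_top, cost, sInf_lt_iff]
  simp

theorem exists_cost_eq_of_ne_top (hρ : G.cost i ρ ≠ ⊤) :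
    ∃ l : ℕ, G.cost i ρ = l ∧ ρ l ∈ G.goal i := by
  obtain ⟨l, hl⟩ := G.cost_ne_top_iff.1 hρ
  have hne : {n : ℕ∞ | ∃ l : ℕ, n = l ∧ ρ l ∈ G.goal i}.Nonempty := ⟨l, l, rfl, hl⟩
  exact csInf_mem hne

theorem cost_le_cost_of_eqOn (h : Set.EqOn ρ π (Set.Iic N)) (hρ : G.cost i ρ ≤ N) :
    G.cost i π ≤ G.cost i ρ := by
  obtain ⟨l, hcost, hl⟩ := G.exists_cost_eq_of_ne_top (ne_top_of_le_ne_top (by simp) hρ)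
  rw [hcost] at hρ ⊢
  exact G.cost_le_of_mem_goal (h (Nat.cast_le.1 hρ) ▸ hl)

theorem cost_eq_cost_of_eqOn (h : Set.EqOn ρ π (Set.Iic N)) (hρ : G.cost i ρ ≤ N) :
    G.cost i π = G.cost i ρ :=
  have hle := G.cost_le_cost_of_eqOn h hρ
  hle.antisymm (G.cost_le_cost_of_eqOn h.symm (hle.trans hρ))

theorem exists_nat_cost_le [Finite P] (ρ : ℕ → V) :
    ∃ N : ℕ, ∀ i, G.cost i ρ ≠ ⊤ → G.cost i ρ ≤ N := by
  obtain ⟨N, hN⟩ := (Set.finite_range fun i => (G.cost i ρ).toNat).bddAbove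
  refine ⟨N, fun i hi => ?_⟩
  rw [← ENat.natCast_toNat hi]
  exact Nat.cast_le.2 (hN ⟨i, rfl⟩)

end Costs

section Outcomes

variable {P V : Type} (G : ReachGame P V) {p q prof : P → List V → V} {j : P} {s : List V → V}

theorem lastV_append (h δ : List V) : G.lastV (h ++ δ) = δ.getLastD (G.lastV h) := by
  simp [lastV]

theorem length_outHist (prof : P → List V → V) (n : ℕ) : (G.outHist prof n).length = n + 1 := by
  induction n with
  | zero => rfl
  | succ n ih => simp [outHist, ih]

variable {G} in
theorem IsHistory.append_singleton {h : List V} {w : V} (hh : G.IsHistory h)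
    (hw : G.E (G.lastV h) w) : G.IsHistory (h ++ [w]) := by
  obtain ⟨hne, hhead, hchain⟩ := hh
  refine ⟨by simp, by rw [List.head?_append_of_ne_nil _ hne, hhead],
    List.isChain_append.2 ⟨hchain, .singleton w, ?_⟩⟩
  intro x hx y hy
  have hlast : G.lastV h = x := by simp [lastV, Option.mem_def.1 hx]
  obtain rfl : w = y := by simpa using hy
  rwa [← hlast]

theorem isHistory_outHist (hprof : G.IsProfile prof) (n : ℕ) : G.IsHistory (G.outHist prof n) := by
  induction n with
  | zero => exact ⟨by simp [outHist], rfl, .singleton _⟩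
  | succ n ih => exact ih.append_singleton (hprof _ _ ih rfl)

theorem outcome_succ (prof : P → List V → V) (n : ℕ) :
    G.outcome prof (n + 1) = prof (G.owner (G.outcome prof n)) (G.outHist prof n) := by
  simp only [outcome, outHist, lastV_append, List.getLastD_cons, List.getLastD_nil]

theorem edge_outcome (hprof : G.IsProfile prof) (n : ℕ) :
    G.E (G.outcome prof n) (G.outcome prof (n + 1)) := by
  rw [outcome_succ]
  exact hprof _ _ (G.isHistory_outHist hprof n) rfl

theorem eqOn_outHist_of_agree {N : ℕ} (h : ∀ i l, l.length ≤ N → p i l = q i l) :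
    Set.EqOn (G.outHist p) (G.outHist q) (Set.Iic N) := by
  intro n hn
  induction n with
  | zero => rfl
  | succ n ih =>
    have hlen : (G.outHist q n).length ≤ N := (G.length_outHist q n).trans_le hn
    simp only [outHist, ih (Nat.le_of_succ_le hn), h _ _ hlen]

theorem eqOn_outcome_of_agree {N : ℕ} (h : ∀ i l, l.length ≤ N → p i l = q i l) :
    Set.EqOn (G.outcome p) (G.outcome q) (Set.Iic N) :=
  fun _ hn => congrArg G.lastV (G.eqOn_outHist_of_agree h hn)

variable {G} in
theorem IsProfile.update [DecidableEq P] (hprof : G.IsProfile prof) (hs : G.IsStrategy j s) :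
    G.IsProfile (Function.update prof j s) := by
  intro i
  obtain rfl | hij := eq_or_ne i j
  · rwa [Function.update_self]
  · rw [Function.update_of_ne hij]
    exact hprof i

variable {G} in
theorem IsStrategy.update [DecidableEq (List V)] {h : List V} {w : V} (hs : G.IsStrategy j s)
    (hw : G.E (G.lastV h) w) : G.IsStrategy j (Function.update s h w) := by
  intro h' hh' hown
  obtain rfl | hne := eq_or_ne h' h
  · rwa [Function.update_self]
  · rw [Function.update_of_ne hne]
    exact hs h' hh' hown

end Outcomes

section DeviationReach

variable {P V : Type} [DecidableEq P] (G : ReachGame P V) {prof : P → List V → V} {j : P} {v w : V}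

/-- The vertices visited by some play in which player `j` deviates arbitrarily from `prof`
while the other players follow it. -/
def deviationReach (prof : P → List V → V) (j : P) : Set V :=
  {v | ∃ s, G.IsStrategy j s ∧ ∃ n, G.outcome (Function.update prof j s) n = v}

theorem mem_deviationReach_of_edge (hv : v ∈ G.deviationReach prof j) (hown : G.owner v = j)
    (hvw : G.E v w) : w ∈ G.deviationReach prof j := by
  classical
  obtain ⟨s, hs, n, rfl⟩ := hv
  let h := G.outHist (Function.update prof j s) n
  let s' := Function.update s h w
  have agree : ∀ i l, l.length ≤ n →
      Function.update prof j s' i l = Function.update prof j s i l := by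
    intro i l hl
    have hne : l ≠ h := by
      rintro rfl
      exact absurd hl (by simp [h, length_outHist])
    obtain rfl | hij := eq_or_ne i j
    · simp [s', Function.update_of_ne hne]
    · simp [Function.update_of_ne hij]
  have same_hist : G.outHist (Function.update prof j s') n = h :=
    G.eqOn_outHist_of_agree agree Set.self_mem_Iic
  have same_owner : G.owner (G.outcome (Function.update prof j s') n) = j := by
    rwa [outcome, same_hist]
  refine ⟨s', hs.update hvw, n + 1, ?_⟩
  rw [outcome_succ, same_owner, same_hist, Function.update_self]
  exact Function.update_self h w s

theorem exists_edge_mem_deviationReach (hprof : G.IsProfile prof)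
    (hv : v ∈ G.deviationReach prof j) : ∃ w ∈ G.deviationReach prof j, G.E v w := by
  obtain ⟨s, hs, n, rfl⟩ := hv
  exact ⟨_, ⟨s, hs, n + 1, rfl⟩, G.edge_outcome (hprof.update hs) n⟩

end DeviationReach

section PositionalTail

variable {P V : Type} (G : ReachGame P V) {prof : P → List V → V} {f : P → V → V} {i j : P}
  {s : List V → V} {N : ℕ}

open Classical in
/-- A positional strategy, for any player, that moves into `X` whenever some edge leads there. -/
noncomputable def stayIn (X : Set V) (v : V) : V :=
  if h : ∃ w ∈ X, G.E v w then h.choose else (G.total v).choose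

theorem edge_stayIn (X : Set V) (v : V) : G.E v (G.stayIn X v) := by
  unfold stayIn
  split_ifs with h
  · exact h.choose_spec.2
  · exact (G.total v).choose_spec

theorem stayIn_mem {X : Set V} {v : V} (h : ∃ w ∈ X, G.E v w) : G.stayIn X v ∈ X := by
  rw [stayIn, dif_pos h]
  exact h.choose_spec.1

/-- The profile that follows `prof` for the first `N` moves and then plays the positional
strategies `f`. A history preceding the `n`-th move has `n` vertices. -/
def switchAfter (N : ℕ) (prof : P → List V → V) (f : P → V → V) (i : P) (h : List V) : V :=
  if h.length ≤ N then prof i h else f i (G.lastV h)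

theorem switchAfter_of_length_le {h : List V} (hh : h.length ≤ N) :
    G.switchAfter N prof f i h = prof i h :=
  if_pos hh

theorem switchAfter_of_lt_length {h : List V} (hh : N < h.length) :
    G.switchAfter N prof f i h = f i (G.lastV h) :=
  if_neg hh.not_ge

theorem isProfile_switchAfter (N : ℕ) (hprof : G.IsProfile prof) (hf : ∀ i v, G.E v (f i v)) :
    G.IsProfile (G.switchAfter N prof f) := by
  intro i h hh hown
  unfold switchAfter
  split_ifs
  · exact hprof i h hh hown
  · exact hf i _

theorem finiteMemory_of_finite_image {α : Type*} (memory : List V → α)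
    (hfin : (memory '' {h | G.IsHistory h}).Finite)
    (hmem : ∀ h h', memory h = memory h' → G.MemEq i s h h') : G.FiniteMemory i s := by
  obtain ⟨S, hS, hbij⟩ := Set.exists_subset_bijOn {h | G.IsHistory h} memory
  refine ⟨(hbij.finite_iff_finite.2 hfin).toFinset, fun h hh => ?_⟩
  obtain ⟨h', hh'S, heq⟩ := hbij.surjOn ⟨h, hh, rfl⟩
  exact ⟨h', by simpa using hh'S, hS hh'S, hmem h h' heq.symm⟩

/- The first `N + 1` vertices and the last one are enough memory: the former determine a history
of length at most `N` completely, and identify longer ones as such. -/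
theorem finiteMemory_switchAfter [Finite V] (i : P) :
    G.FiniteMemory i (G.switchAfter N prof f i) := by
  refine G.finiteMemory_of_finite_image (fun h => (h.take (N + 1), G.lastV h)) ?_ ?_
  · refine ((List.finite_length_le V (N + 1)).prod Set.finite_univ).subset ?_
    rintro _ ⟨h, -, rfl⟩
    simp
  · intro h h' heq δ _ _ _ _
    obtain ⟨htake, hlast⟩ := Prod.mk.inj heq
    have hlen : min (N + 1) h.length = min (N + 1) h'.length := by
      simpa using congrArg List.length htake
    obtain hle | hlt := le_or_gt h.length N
    · rw [List.take_of_length_le (by omega), List.take_of_length_le (by omega)] at htake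
      rw [htake]
    · rw [switchAfter_of_lt_length _ (by simp; omega),
        switchAfter_of_lt_length _ (by simp; omega), lastV_append, lastV_append, hlast]

theorem eqOn_outcome_switchAfter :
    Set.EqOn (G.outcome (G.switchAfter N prof f)) (G.outcome prof) (Set.Iic N) :=
  G.eqOn_outcome_of_agree fun _ _ hl => G.switchAfter_of_length_le hl

theorem eqOn_outcome_update_switchAfter [DecidableEq P] :
    Set.EqOn (G.outcome (Function.update (G.switchAfter N prof f) j s))
      (G.outcome (Function.update prof j s)) (Set.Iic N) := by
  refine G.eqOn_outcome_of_agree fun i l hl => ?_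
  obtain rfl | hij := eq_or_ne i j
  · simp only [Function.update_self]
  · simp only [Function.update_of_ne hij, G.switchAfter_of_length_le hl]

theorem outcome_update_switchAfter_mem_deviationReach [DecidableEq P] (hprof : G.IsProfile prof)
    (hf : ∀ i v, G.E v (f i v))
    (hstay : ∀ i ≠ j, ∀ v ∈ G.deviationReach prof j, f i v ∈ G.deviationReach prof j)
    (hs : G.IsStrategy j s) (n : ℕ) :
    G.outcome (Function.update (G.switchAfter N prof f) j s) n ∈ G.deviationReach prof j := by
  have hdev := (G.isProfile_switchAfter N hprof hf).update hs
  induction n with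
  | zero => exact ⟨s, hs, 0, rfl⟩
  | succ n ih =>
    obtain hn | hn := le_or_gt (n + 1) N
    · exact ⟨s, hs, n + 1, (G.eqOn_outcome_update_switchAfter hn).symm⟩
    by_cases hown : G.owner (G.outcome (Function.update (G.switchAfter N prof f) j s) n) = j
    · exact G.mem_deviationReach_of_edge ih hown (G.edge_outcome hdev n)
    · rw [outcome_succ, Function.update_of_ne hown,
        G.switchAfter_of_lt_length (by rwa [length_outHist])]
      exact hstay _ hown _ ih

end PositionalTail

section TwoPlayers

variable {V : Type} (G : ReachGame (Fin 2) V) {prof : Fin 2 → List V → V} {j : Fin 2}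
  {ρ π π' : ℕ → V} {s : List V → V} {N : ℕ}

/-- Player `j` does not gain by replacing `ρ` with `π`: his own cost does not decrease, and if it
stays the same then the cost of his opponent `j.rev` does not increase. This is the negation of
the strict preferences `prec1` (for `j = 0`) and `prec2` (for `j = 1`). -/
def WeaklyPrefers (j : Fin 2) (ρ π : ℕ → V) : Prop :=
  G.cost j ρ ≤ G.cost j π ∧ (G.cost j ρ = G.cost j π → G.cost j.rev π ≤ G.cost j.rev ρ)

theorem isSecure_iff :
    G.IsSecure prof ↔ ∀ j s, G.IsStrategy j s →
      G.WeaklyPrefers j (G.outcome prof) (G.outcome (Function.update prof j s)) := by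
  simp [IsSecure, prec1, prec2, costPair, WeaklyPrefers, Fin.forall_fin_two]

variable {G} in
theorem WeaklyPrefers.of_eqOn (hpref : G.WeaklyPrefers j ρ π) (h : Set.EqOn π' π (Set.Iic N))
    (hN : ∀ i, G.cost i ρ ≠ ⊤ → G.cost i ρ ≤ N) (htop : G.cost j ρ = ⊤ → G.cost j π' = ⊤) :
    G.WeaklyPrefers j ρ π' := by
  obtain ⟨hown, hopp⟩ := hpref
  constructor
  · by_contra! hlt
    have hbound : G.cost j ρ ≤ N := hN j fun hρ => hlt.ne ((htop hρ).trans hρ.symm)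
    exact hlt.not_ge (hown.trans_eq (G.cost_eq_cost_of_eqOn h (hlt.le.trans hbound)))
  · intro heq
    obtain hρ | hρ := eq_or_ne (G.cost j.rev ρ) ⊤
    · exact le_top.trans_eq hρ.symm
    have hsame : G.cost j ρ = G.cost j π := by
      obtain hj | hj := eq_or_ne (G.cost j ρ) ⊤
      · exact hown.antisymm (le_top.trans_eq hj.symm)
      · exact heq.trans (G.cost_eq_cost_of_eqOn h (heq ▸ hN j hj)).symm
    have hle := hopp hsame
    exact (G.cost_le_cost_of_eqOn h.symm (hle.trans (hN _ hρ))).trans hle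

theorem notMem_goal_of_mem_deviationReach {v : V} (hsec : G.IsSecure prof)
    (hj : G.cost j (G.outcome prof) = ⊤) (hv : v ∈ G.deviationReach prof j) : v ∉ G.goal j := by
  obtain ⟨s, hs, n, rfl⟩ := hv
  have hle := (G.isSecure_iff.1 hsec j s hs).1
  rw [hj, top_le_iff] at hle
  exact fun hgoal => G.cost_ne_top_iff.2 ⟨n, hgoal⟩ hle

/-- The profile in which each player follows `prof` for `N` moves and then stays, positionally,
among the vertices that his opponent can reach by deviating from `prof`. -/
noncomputable def confineAfter (N : ℕ) (prof : Fin 2 → List V → V) : Fin 2 → List V → V :=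
  G.switchAfter N prof fun i => G.stayIn (G.deviationReach prof i.rev)

theorem isProfile_confineAfter (N : ℕ) (hprof : G.IsProfile prof) :
    G.IsProfile (G.confineAfter N prof) :=
  G.isProfile_switchAfter N hprof fun _ => G.edge_stayIn _

theorem outcome_update_confineAfter_mem_deviationReach (hprof : G.IsProfile prof)
    (hs : G.IsStrategy j s) (n : ℕ) :
    G.outcome (Function.update (G.confineAfter N prof) j s) n ∈ G.deviationReach prof j := by
  refine G.outcome_update_switchAfter_mem_deviationReach hprof (fun _ => G.edge_stayIn _) ?_ hs n
  intro i hij v hv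
  obtain rfl : i.rev = j := by grind
  exact G.stayIn_mem (G.exists_edge_mem_deviationReach hprof hv)

theorem cost_update_confineAfter_eq_top (N : ℕ) (hprof : G.IsProfile prof)
    (hsec : G.IsSecure prof) (hs : G.IsStrategy j s) (hj : G.cost j (G.outcome prof) = ⊤) :
    G.cost j (G.outcome (Function.update (G.confineAfter N prof) j s)) = ⊤ := by
  by_contra hne
  obtain ⟨n, hn⟩ := G.cost_ne_top_iff.1 hne
  exact G.notMem_goal_of_mem_deviationReach hsec hj
    (G.outcome_update_confineAfter_mem_deviationReach hprof hs n) hn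

theorem cost_confineAfter (hprof : G.IsProfile prof) (hsec : G.IsSecure prof)
    (hN : G.cost j (G.outcome prof) ≠ ⊤ → G.cost j (G.outcome prof) ≤ N) :
    G.cost j (G.outcome (G.confineAfter N prof)) = G.cost j (G.outcome prof) := by
  obtain hj | hj := eq_or_ne (G.cost j (G.outcome prof)) ⊤
  · have htop := G.cost_update_confineAfter_eq_top N hprof hsec
      (G.isProfile_confineAfter N hprof j) hj
    rwa [Function.update_eq_self, ← hj] at htop
  · exact G.cost_eq_cost_of_eqOn G.eqOn_outcome_switchAfter.symm (hN hj)

theorem isSecure_confineAfter (hprof : G.IsProfile prof) (hsec : G.IsSecure prof)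
    (hN : ∀ i, G.cost i (G.outcome prof) ≠ ⊤ → G.cost i (G.outcome prof) ≤ N) :
    G.IsSecure (G.confineAfter N prof) := by
  refine G.isSecure_iff.2 fun j s hs => ?_
  have hpref := (G.isSecure_iff.1 hsec j s hs).of_eqOn G.eqOn_outcome_update_switchAfter hN
    (G.cost_update_confineAfter_eq_top N hprof hsec hs)
  rwa [WeaklyPrefers, ← G.cost_confineAfter hprof hsec (hN _),
    ← G.cost_confineAfter hprof hsec (hN _)] at hpref

theorem typeOf_confineAfter (hprof : G.IsProfile prof) (hsec : G.IsSecure prof)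
    (hN : ∀ i, G.cost i (G.outcome prof) ≠ ⊤ → G.cost i (G.outcome prof) ≤ N) :
    G.typeOf (G.confineAfter N prof) = G.typeOf prof := by
  ext i
  simp only [typeOf, Set.mem_ofPred_eq, ← cost_ne_top_iff, G.cost_confineAfter hprof hsec (hN i)]

end TwoPlayers

end ReachGame

/-- If a quantitative two-player reachability game `G` has a secure
equilibrium, then it has a finite-memory secure equilibrium of the same type. -/
theorem finiteMemory_secure_same_type {V : Type} [Fintype V]
    (G : ReachGame (Fin 2) V)
    (prof : Fin 2 → List V → V) (hprof : G.IsProfile prof) (hsec : G.IsSecure prof) :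
    ∃ τ : Fin 2 → List V → V,
      G.IsProfile τ ∧ G.FiniteMemoryProfile τ ∧ G.IsSecure τ ∧
      G.typeOf τ = G.typeOf prof := by
  obtain ⟨N, hN⟩ := G.exists_nat_cost_le (G.outcome prof)
  exact ⟨G.confineAfter N prof, G.isProfile_confineAfter N hprof,
    fun i => G.finiteMemory_switchAfter i, G.isSecure_confineAfter hprof hsec hN,
    G.typeOf_confineAfter hprof hsec hN⟩
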